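/- The credits distributed by a single batch to jobs assigned to intervals of type at most k total at most 2^{k+1}: let 𝒜 = {(I, t_I, J_I)} be a valid interval assignment for a finite job set J, and for an assigned job j let I(j) denote the unique tuple of 𝒜 whose job set contains j. Let k ≥ 0, let τ ∈ ℤ, and let F ⊆ J be any set of jobs with r_j ≤ τ ≤ d_j for every j ∈ F. Then Σ 2^{t_{I(j)}}/|J_{I(j)}| ≤ 2^{k+1}, where the sum ranges over the assigned jobs j ∈ F with t_{I(j)} ≤ k. -/

import Mathlib

structure SchedInstance where
  jobs : Finset ℕ
  r : ℕ → ℤ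
  d : ℕ → ℤ
  window : ∀ j ∈ jobs, r j ≤ d j

structure IAItem where
  lo : ℤ
  hi : ℤ
  itype : ℕ
  ijobs : Finset ℕ
deriving DecidableEq

def ValidAssignment (B : ℕ → ℕ) (P : SchedInstance) (A : Finset IAItem) : Prop :=
  (∀ e ∈ A, if e.itype = 0 then e.ijobs.card = 1 else e.ijobs.card = B (e.itype - 1)) ∧
  (∀ e ∈ A, ∀ j ∈ e.ijobs, j ∈ P.jobs ∧ e.lo ≤ P.r j ∧ P.d j ≤ e.hi) ∧
  (∀ e ∈ A, ∀ e' ∈ A, e ≠ e' → e.itype = e'.itype →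
      Set.Icc e.lo e.hi ∩ Set.Icc e'.lo e'.hi = ∅) ∧
  (∀ e ∈ A, ∀ e' ∈ A, e ≠ e' → Disjoint e.ijobs e'.ijobs)

/-!
A batch runs at a single time `τ`, so only the intervals containing `τ` credit its jobs.
Intervals of equal type are disjoint, hence at most one of each type contains `τ`, and a tuple of
type `t` gives out at most `2 ^ t` credits in total. Thus the batch distributes at most
`∑ t ≤ k, 2 ^ t < 2 ^ (k + 1)`.
-/

section

open Finset

variable {ι κ α T K : Type*}

theorem sum_pow_lt_pow_of_injOn {s : Finset ι} {f : ι → ℕ} {m n : ℕ} (hm : 2 ≤ m)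
    (hf : Set.InjOn f s) (hlt : ∀ i ∈ s, f i < n) : ∑ i ∈ s, m ^ f i < m ^ n := by
  rw [← sum_image (f := fun t ↦ m ^ t) hf]
  exact Nat.geomSum_lt hm (forall_mem_image.2 hlt)

theorem injOn_setOf_mem_of_disjoint {A : Set ι} {t : ι → κ} {I : ι → Set T}
    (hdisj : ∀ e ∈ A, ∀ e' ∈ A, e ≠ e' → t e = t e' → Disjoint (I e) (I e')) (τ : T) :
    Set.InjOn t {e ∈ A | τ ∈ I e} := by
  rintro e ⟨he, hτ⟩ e' ⟨he', hτ'⟩ htype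
  by_contra hne
  exact Set.disjoint_left.1 (hdisj e he e' he' hne htype) hτ hτ'

variable [DecidableEq α] [Field K]

/-- The credits received by the jobs of `F` from a tuple with job set `J`, when a total credit `w`
is split evenly among the jobs of `J`; the paper has `w = 2 ^ t` for a tuple of type `t`. -/
def credits (J F : Finset α) (w : K) : K :=
  #(J ∩ F) * (w / #J)

theorem credits_eq_zero_of_disjoint {J F : Finset α} (h : Disjoint J F) (w : K) :
    credits J F w = 0 := by
  simp [credits, disjoint_iff_inter_eq_empty.1 h]

variable [LinearOrder K] [IsStrictOrderedRing K]

theorem credits_le (J F : Finset α) {w : K} (hw : 0 ≤ w) : credits J F w ≤ w := by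
  have hcard : (#(J ∩ F) : K) ≤ #J := by exact_mod_cast card_le_card inter_subset_left
  rw [credits, mul_div_left_comm]
  exact mul_le_of_le_one_right hw (div_le_one_of_le₀ hcard (Nat.cast_nonneg _))

theorem sum_credits_le_sum_filter {A : Finset ι} {J : ι → Finset α} {F : Finset α} {w : ι → K}
    (p : ι → Prop) [DecidablePred p] (hp : ∀ e ∈ A, ¬ p e → Disjoint (J e) F)
    (hw : ∀ e ∈ A, 0 ≤ w e) :
    ∑ e ∈ A, credits (J e) F (w e) ≤ ∑ e ∈ A with p e, w e := by
  rw [sum_filter]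
  refine sum_le_sum fun e he ↦ ?_
  split_ifs with hpe
  · exact credits_le _ _ (hw e he)
  · exact (credits_eq_zero_of_disjoint (hp e he hpe) _).le

theorem credits_small_types_bound_general {A : Finset ι} {t : ι → ℕ} {I : ι → Set T}
    {J : ι → Finset α} {window : α → Set T}
    (hwindow : ∀ e ∈ A, ∀ j ∈ J e, window j ⊆ I e)
    (hdisj : ∀ e ∈ A, ∀ e' ∈ A, e ≠ e' → t e = t e' → Disjoint (I e) (I e'))
    (k : ℕ) {τ : T} {F : Finset α} (hF : ∀ j ∈ F, τ ∈ window j) :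
    ∑ e ∈ A with t e ≤ k, credits (J e) F ((2 : K) ^ t e) < 2 ^ (k + 1) := by
  classical
  have hcredited : ∀ e ∈ A, τ ∉ I e → Disjoint (J e) F := fun e he hτ ↦
    disjoint_left.2 fun j hjJ hjF ↦ hτ (hwindow e he j hjJ (hF j hjF))
  have hinj : Set.InjOn t ({e ∈ {e ∈ A | t e ≤ k} | τ ∈ I e} : Finset ι) :=
    (injOn_setOf_mem_of_disjoint hdisj τ).mono fun e he ↦ by
      simp only [coe_filter, mem_filter] at he
      exact ⟨he.1.1, he.2⟩
  have hgeom : ∑ e ∈ {e ∈ A | t e ≤ k} with τ ∈ I e, 2 ^ t e < 2 ^ (k + 1) :=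
    sum_pow_lt_pow_of_injOn le_rfl hinj fun e he ↦
      Nat.lt_succ_of_le (mem_filter.1 (mem_filter.1 he).1).2
  calc ∑ e ∈ A with t e ≤ k, credits (J e) F ((2 : K) ^ t e)
      ≤ ∑ e ∈ {e ∈ A | t e ≤ k} with τ ∈ I e, (2 : K) ^ t e :=
        sum_credits_le_sum_filter _ (fun e he ↦ hcredited e (mem_of_mem_filter e he))
          fun _ _ ↦ by positivity
    _ < 2 ^ (k + 1) := by exact_mod_cast hgeom

end

namespace ValidAssignment

variable {B : ℕ → ℕ} {P : SchedInstance} {A : Finset IAItem}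

theorem window_subset (hA : ValidAssignment B P A) :
    ∀ e ∈ A, ∀ j ∈ e.ijobs, Set.Icc (P.r j) (P.d j) ⊆ Set.Icc e.lo e.hi := fun e he j hj ↦
  Set.Icc_subset_Icc (hA.2.1 e he j hj).2.1 (hA.2.1 e he j hj).2.2

theorem disjoint_of_itype_eq (hA : ValidAssignment B P A) :
    ∀ e ∈ A, ∀ e' ∈ A, e ≠ e' → e.itype = e'.itype →
      Disjoint (Set.Icc e.lo e.hi) (Set.Icc e'.lo e'.hi) := fun e he e' he' hne htype ↦
  Set.disjoint_iff_inter_eq_empty.2 (hA.2.2.1 e he e' he' hne htype)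

end ValidAssignment

/-- the credits given to jobs of `F` (all of whose windows contain a
common time `τ`) that are assigned to interval-tuples of type at most `k` total at
most `2^(k+1)`.  Since every job lies in at most one tuple, the sum over assigned
jobs `j ∈ F` with `t_{I(j)} ≤ k` of `2^{t_{I(j)}} / |J_{I(j)}|` is written as a sum
over the tuples of type at most `k`. -/
theorem credits_small_types_bound
    (B : ℕ → ℕ) (hB1 : ∀ k', 1 ≤ B k') (hBmono : StrictMono B)
    (P : SchedInstance) (A : Finset IAItem) (hA : ValidAssignment B P A)
    (k : ℕ) (τ : ℤ) (F : Finset ℕ) (hF : F ⊆ P.jobs)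
    (hFwin : ∀ j ∈ F, P.r j ≤ τ ∧ τ ≤ P.d j) :
    ∑ e ∈ A.filter (fun e => e.itype ≤ k),
        ((e.ijobs ∩ F).card : ℝ) * ((2 : ℝ) ^ e.itype / (e.ijobs.card : ℝ))
      ≤ (2 : ℝ) ^ (k + 1) :=
  (credits_small_types_bound_general (I := fun e ↦ Set.Icc e.lo e.hi) hA.window_subset
    hA.disjoint_of_itype_eq k hFwin).le
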